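/- The atomic cut rule ai↑ is derivable from shallow atomic cut and switch: every instance of ai↑, with premise C(a,ā) and conclusion C{f}, can be replaced by a derivation from C(a,ā) to C{f} using only the switch rule s and shallow instances of ai↑, i.e. instances of the form inferring S from [S,(a,ā)]. -/

import Mathlib

/-!
Switch alone moves the content `X` of a hole to the root of the formula, leaving `f` behind:
`C{X}` derives `[C{f},X]`. By induction on `C`, the empty context is the unit law `X = [f,X]`,
a disjunction around the hole is passed by associativity and commutativity, and a conjunction by
one switch from `(Q,[C{f},X])` to `[(Q,C{f}),X]`. When `X` is `(a,ā)`, the formula reached is the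
premise of a shallow cut with conclusion `C{f}`.
-/

/-!
Deep-inference systems SKSg, SKS and KS for classical propositional logic
(the calculus of structures).  Formulas are built from atoms `a`, their
negations `ā`, and the units `t` (true) and `f` (false) by disjunction
`[P,Q]` (`dis`) and conjunction `(P,Q)` (`con`), and are considered modulo
the congruence `Equiv` generated by associativity, commutativity and the
unit laws.  Rules apply inside an arbitrary one-hole context and modulo the
equivalence.
-/

namespace DI

/-- Formulas of the calculus of structures for classical logic:
units `t`, `f`; atoms `pos a`; negated atoms `neg a`; disjunction `dis`
(written `[P,Q]`); conjunction `con` (written `(P,Q)`). -/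
inductive F : Type where
  | tt  : F
  | ff  : F
  | pos : ℕ → F
  | neg : ℕ → F
  | dis : F → F → F
  | con : F → F → F
deriving DecidableEq

/-- Negation, pushed to the atoms by the De Morgan laws:
`¬t = f`, `¬f = t`, `¬[P,Q] = (¬P,¬Q)`, `¬(P,Q) = [¬P,¬Q]`, `¬¬P = P`. -/
def F.negF : F → F
  | .tt => .ff
  | .ff => .tt
  | .pos a => .neg a
  | .neg a => .pos a
  | .dis P Q => .con P.negF Q.negF
  | .con P Q => .dis P.negF Q.negF

/-- Atoms are the propositional symbols and their negations. -/
def F.isAtom : F → Prop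
  | .pos _ => True
  | .neg _ => True
  | _ => False

/-- Syntactic equivalence of formulas: the smallest congruence generated by
associativity and commutativity of both connectives and the unit laws
`[t,t]=t`, `(f,f)=f`, `[f,P]=P`, `(t,P)=P`. -/
inductive Equiv : F → F → Prop where
  | refl (P : F) : Equiv P P
  | symm {P Q : F} : Equiv P Q → Equiv Q P
  | trans {P Q R : F} : Equiv P Q → Equiv Q R → Equiv P R
  | disComm (P Q : F) : Equiv (.dis P Q) (.dis Q P)
  | conComm (P Q : F) : Equiv (.con P Q) (.con Q P)
  | disAssoc (P Q R : F) : Equiv (.dis (.dis P Q) R) (.dis P (.dis Q R))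
  | conAssoc (P Q R : F) : Equiv (.con (.con P Q) R) (.con P (.con Q R))
  | ttDis : Equiv (.dis .tt .tt) .tt
  | ffCon : Equiv (.con .ff .ff) .ff
  | ffDis (P : F) : Equiv (.dis .ff P) P
  | ttCon (P : F) : Equiv (.con .tt P) P
  | disCongr {P P' Q Q' : F} :
      Equiv P P' → Equiv Q Q' → Equiv (.dis P Q) (.dis P' Q')
  | conCongr {P P' Q Q' : F} :
      Equiv P P' → Equiv Q Q' → Equiv (.con P Q) (.con P' Q')

/-- One-hole contexts. -/
inductive Ctx : Type where
  | hole : Ctx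
  | disL : Ctx → F → Ctx
  | disR : F → Ctx → Ctx
  | conL : Ctx → F → Ctx
  | conR : F → Ctx → Ctx

/-- Plugging a formula into the hole of a context. -/
def Ctx.fill : Ctx → F → F
  | .hole, P => P
  | .disL C Q, P => .dis (C.fill P) Q
  | .disR Q C, P => .dis Q (C.fill P)
  | .conL C Q, P => .con (C.fill P) Q
  | .conR Q C, P => .con Q (C.fill P)

/-- Names of the inference rules of SKSg and SKS. -/
inductive Rule : Type where
  | iDown | iUp | wDown | wUp | cDown | cUp | s | m
  | aiDown | aiUp | awDown | awUp | acDown | acUp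
deriving DecidableEq

/-- The rules, read at the root of a formula (premise on the left,
conclusion on the right). -/
inductive RootStep : Rule → F → F → Prop where
  | iDown (P : F) : RootStep .iDown .tt (.dis P P.negF)
  | iUp (P : F) : RootStep .iUp (.con P P.negF) .ff
  | wDown (P : F) : RootStep .wDown .ff P
  | wUp (P : F) : RootStep .wUp P .tt
  | cDown (P : F) : RootStep .cDown (.dis P P) P
  | cUp (P : F) : RootStep .cUp P (.con P P)
  | s (P Q R : F) : RootStep .s (.con P (.dis Q R)) (.dis (.con P Q) R)
  | m (P Q R S : F) :
      RootStep .m (.dis (.con P Q) (.con R S)) (.con (.dis P R) (.dis Q S))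
  | aiDown (A : F) (h : A.isAtom) : RootStep .aiDown .tt (.dis A A.negF)
  | aiUp (A : F) (h : A.isAtom) : RootStep .aiUp (.con A A.negF) .ff
  | awDown (A : F) (h : A.isAtom) : RootStep .awDown .ff A
  | awUp (A : F) (h : A.isAtom) : RootStep .awUp A .tt
  | acDown (A : F) (h : A.isAtom) : RootStep .acDown (.dis A A) A
  | acUp (A : F) (h : A.isAtom) : RootStep .acUp A (.con A A)

/-- One inference step using a rule from the set `Rs`, applied inside an
arbitrary context and modulo the equivalence. -/
def Step (Rs : Set Rule) (P Q : F) : Prop :=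
  ∃ r ∈ Rs, ∃ (C : Ctx) (P' Q' : F),
    RootStep r P' Q' ∧ Equiv P (C.fill P') ∧ Equiv (C.fill Q') Q

/-- Derivations over an arbitrary step relation: a finite sequence of rule
instances from the premise to the conclusion (modulo the equivalence). -/
inductive Deriv (St : F → F → Prop) : F → F → Prop where
  | eqv {P Q : F} : Equiv P Q → Deriv St P Q
  | step {P Q R : F} : St P Q → Deriv St Q R → Deriv St P R

/-- The system SKSg: general (non-atomic) rules plus switch. -/
def SKSg : Set Rule := {.iDown, .iUp, .wDown, .wUp, .cDown, .cUp, .s}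

/-- The system SKS: atomic rules plus switch and medial. -/
def SKS : Set Rule := {.aiDown, .aiUp, .awDown, .awUp, .acDown, .acUp, .s, .m}

/-- The system KS: the down fragment of SKS. -/
def KS : Set Rule := {.aiDown, .awDown, .acDown, .s, .m}

/-- A proof of `Q` in the system `Rs` is a derivation from the unit `t` to `Q`. -/
def Proof (Rs : Set Rule) (Q : F) : Prop := Deriv (Step Rs) .tt Q

/-- A rule `r` is derivable from a set `Rs` of rules if every instance of `r`
(with premise `P` and conclusion `Q`) can be replaced by a derivation from
`P` to `Q` using only rules of `Rs`. -/
def RuleDerivable (r : Rule) (Rs : Set Rule) : Prop :=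
  ∀ P Q : F, Step {r} P Q → Deriv (Step Rs) P Q

end DI

namespace DI

/-- A shallow instance of the atomic cut rule `ai↑`: from `[S,(a,ā)]`
infer `S` (no surrounding context, modulo the equivalence). -/
def ShallowCut (P Q : F) : Prop :=
  ∃ (S A : F), A.isAtom ∧ Equiv P (.dis S (.con A A.negF)) ∧ Equiv S Q

theorem Equiv.disRightComm (P Q R : F) :
    Equiv (.dis (.dis P Q) R) (.dis (.dis P R) Q) :=
  (Equiv.disAssoc P Q R).trans <|
    (Equiv.disCongr (.refl P) (.disComm Q R)).trans (Equiv.disAssoc P R Q).symm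

theorem Equiv.fill (C : Ctx) {P Q : F} (h : Equiv P Q) : Equiv (C.fill P) (C.fill Q) := by
  induction C with
  | hole => exact h
  | disL C R ih => exact .disCongr ih (.refl R)
  | disR R C ih => exact .disCongr (.refl R) ih
  | conL C R ih => exact .conCongr ih (.refl R)
  | conR R C ih => exact .conCongr (.refl R) ih

/-- Composition of contexts: `C.comp D` is `C{D{ }}`, that is, `D` plugged into the hole of `C`.
It absorbs the context of an inference step into a surrounding one. -/
def Ctx.comp : Ctx → Ctx → Ctx
  | .hole, D => D
  | .disL C Q, D => .disL (C.comp D) Q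
  | .disR Q C, D => .disR Q (C.comp D)
  | .conL C Q, D => .conL (C.comp D) Q
  | .conR Q C, D => .conR Q (C.comp D)

theorem Ctx.fill_comp (C D : Ctx) (P : F) : (C.comp D).fill P = C.fill (D.fill P) := by
  induction C <;> simp only [Ctx.comp, Ctx.fill, *]

section Step

variable {Rs : Set Rule}

theorem Step.fill (C : Ctx) {P Q : F} (h : Step Rs P Q) : Step Rs (C.fill P) (C.fill Q) := by
  obtain ⟨r, hr, D, P', Q', hroot, hP, hQ⟩ := h
  refine ⟨r, hr, C.comp D, P', Q', hroot, ?_, ?_⟩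
  · simpa only [Ctx.fill_comp] using hP.fill C
  · simpa only [Ctx.fill_comp] using hQ.fill C

theorem Step.switch (hs : .s ∈ Rs) (P Q R : F) :
    Step Rs (.con P (.dis Q R)) (.dis (.con P Q) R) :=
  ⟨.s, hs, .hole, _, _, .s P Q R, .refl _, .refl _⟩

theorem Step.switch_comm (hs : .s ∈ Rs) (P Q R : F) :
    Step Rs (.con (.dis P R) Q) (.dis (.con P Q) R) :=
  ⟨.s, hs, .hole, _, _, .s Q P R, .conComm _ _, .disCongr (.conComm Q P) (.refl R)⟩

instance : Trans Equiv (Step Rs) (Step Rs) where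
  trans := fun h ⟨r, hr, C, P', Q', hroot, hP, hQ⟩ =>
    ⟨r, hr, C, P', Q', hroot, h.trans hP, hQ⟩

end Step

theorem ShallowCut.of_isAtom (S : F) {A : F} (hA : A.isAtom) :
    ShallowCut (.dis S (.con A A.negF)) S :=
  ⟨S, A, hA, .refl _, .refl _⟩

instance : Trans Equiv ShallowCut ShallowCut where
  trans := fun h ⟨S, A, hA, hP, hQ⟩ => ⟨S, A, hA, h.trans hP, hQ⟩

instance {St St' : F → F → Prop} [Trans Equiv St St] [Trans Equiv St' St'] :
    Trans Equiv (fun P Q => St P Q ∨ St' P Q) (fun P Q => St P Q ∨ St' P Q) where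
  trans h := Or.imp (Trans.trans h) (Trans.trans h)

namespace Deriv

variable {St St' : F → F → Prop} {P Q R : F}

theorem single (h : St P Q) : Deriv St P Q :=
  .step h (.eqv (.refl Q))

theorem mono (hSt : ∀ ⦃P Q⦄, St P Q → St' P Q) (h : Deriv St P Q) : Deriv St' P Q := by
  induction h with
  | eqv h => exact .eqv h
  | step h _ ih => exact .step (hSt h) ih

theorem fill {Rs : Set Rule} (C : Ctx) (h : Deriv (Step Rs) P Q) :
    Deriv (Step Rs) (C.fill P) (C.fill Q) := by
  induction h with
  | eqv h => exact .eqv (h.fill C)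
  | step h _ ih => exact .step (h.fill C) ih

variable [Trans Equiv St St]

theorem equiv_trans (h : Equiv P Q) (h' : Deriv St Q R) : Deriv St P R := by
  cases h' with
  | eqv h' => exact .eqv (h.trans h')
  | step hstep h' => exact .step (Trans.trans h hstep) h'

theorem trans (h : Deriv St P Q) (h' : Deriv St Q R) : Deriv St P R := by
  induction h with
  | eqv h => exact equiv_trans h h'
  | step h _ ih => exact .step h (ih h')

instance : Trans (Deriv St) (Deriv St) (Deriv St) where
  trans := trans

end Deriv

theorem Deriv.extrude_fill {Rs : Set Rule} (hs : .s ∈ Rs) (C : Ctx) (X : F) :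
    Deriv (Step Rs) (C.fill X) (.dis (C.fill .ff) X) := by
  induction C with
  | hole => exact .eqv (Equiv.ffDis X).symm
  | disL C Q ih =>
    calc Deriv (Step Rs) (.dis (C.fill X) Q) (.dis (.dis (C.fill .ff) X) Q) :=
          ih.fill (.disL .hole Q)
      Deriv (Step Rs) _ (.dis (.dis (C.fill .ff) Q) X) := .eqv (.disRightComm _ _ _)
  | disR Q C ih =>
    calc Deriv (Step Rs) (.dis Q (C.fill X)) (.dis Q (.dis (C.fill .ff) X)) :=
          ih.fill (.disR Q .hole)
      Deriv (Step Rs) _ (.dis (.dis Q (C.fill .ff)) X) := .eqv (Equiv.disAssoc _ _ _).symm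
  | conL C Q ih =>
    calc Deriv (Step Rs) (.con (C.fill X) Q) (.con (.dis (C.fill .ff) X) Q) :=
          ih.fill (.conL .hole Q)
      Deriv (Step Rs) _ (.dis (.con (C.fill .ff) Q) X) := .single (.switch_comm hs _ _ _)
  | conR Q C ih =>
    calc Deriv (Step Rs) (.con Q (C.fill X)) (.con Q (.dis (C.fill .ff) X)) :=
          ih.fill (.conR Q .hole)
      Deriv (Step Rs) _ (.dis (.con Q (C.fill .ff)) X) := .single (.switch hs _ _ _)

/-- The atomic cut rule `ai↑` is derivable from shallow atomic cut and switch: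
every instance of `ai↑`, with premise `C(a,ā)` and conclusion `C{f}`, can be
replaced by a derivation from `C(a,ā)` to `C{f}` using only the switch rule
`s` and shallow instances of `ai↑`. -/
theorem aiUp_from_shallow (A : F) (hA : A.isAtom) (C : Ctx) :
    Deriv (fun P Q => Step {Rule.s} P Q ∨ ShallowCut P Q)
      (C.fill (.con A A.negF)) (C.fill .ff) := by
  have to_root : Deriv (Step {Rule.s}) (C.fill (.con A A.negF))
      (.dis (C.fill .ff) (.con A A.negF)) := .extrude_fill (Set.mem_singleton _) C _
  have cut : ShallowCut (.dis (C.fill .ff) (.con A A.negF)) (C.fill .ff) := .of_isAtom _ hA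
  exact (to_root.mono fun _ _ => Or.inl).trans (.single (.inr cut))

end DI
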